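/- For a subshift of finite type σ : Σ_A → Σ_A determined by a 0-1 transition matrix A, the topological entropy of σ equals the logarithm of the spectral radius of A. -/

import Mathlib

open Filter

noncomputable section

/-- `W` is `(n, ε)`-separated for `f`. -/
def IsSep {X : Type*} [PseudoMetricSpace X] (f : X → X) (n : ℕ) (ε : ℝ) (W : Set X) : Prop :=
  ∀ x ∈ W, ∀ y ∈ W, x ≠ y → ∃ k, k < n ∧ ε < dist (f^[k] x) (f^[k] y)

/-- Maximal cardinality of an `(n, ε)`-separated set. -/
def sepCount {X : Type*} [PseudoMetricSpace X] (f : X → X) (n : ℕ) (ε : ℝ) : ℕ :=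
  sSup {m : ℕ | ∃ W : Finset X, IsSep f n ε (W : Set X) ∧ W.card = m}

/-- Topological entropy via separated sets. -/
def topEnt {X : Type*} [PseudoMetricSpace X] (f : X → X) : EReal :=
  ⨆ (ε : ℝ) (_ : 0 < ε),
    Filter.limsup (fun n : ℕ => ((Real.log (sepCount f n ε) / n : ℝ) : EReal)) atTop

/-- The subshift of finite type determined by a `0`-`1` matrix `A`. -/
def SigmaA (N : ℕ) (A : Matrix (Fin N) (Fin N) ℝ) : Type :=
  {x : ℤ → Fin N // ∀ i : ℤ, A (x i) (x (i + 1)) = 1}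

/-- The shift map on `Σ_A`. -/
def shiftA (N : ℕ) (A : Matrix (Fin N) (Fin N) ℝ) : SigmaA N A → SigmaA N A :=
  fun x => ⟨fun i => x.1 (i + 1), fun i => x.2 (i + 1)⟩

open Topology
open scoped Matrix

/-!
Points of `Σ_A` agreeing on a long central window are uniformly close, and points at distance at
most some fixed `ε` agree at `0`. Hence the maximal `(n, ε)`-separated sets are, up to a bounded
change of `n`, as large as the set of words of length `n` occurring in `Σ_A`, and the entropy is
the exponential growth rate of that set.

The sum of the entries of `A ^ n` counts the admissible words of length `n + 1`. Such a word may
fail to occur in `Σ_A`, but since the alphabet is finite it does occur as soon as it extends by a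
fixed number of letters on either side, so the two counts have the same growth rate. On nonnegative
matrices the sum of the entries is comparable to an operator norm, and Gelfand's formula identifies
this rate with `log` of the spectral radius.
-/

/-! ### Weighted paths and powers of a matrix -/

section PathWeight

variable {ι κ R : Type*}

/-- The weight of the path `w 0 → w 1 → ⋯ → w n` for the edge weights `A`, that is, the product of
the weights of its edges. For a `0`-`1` matrix it is the indicator of the admissible words. -/
def pathWeight [CommMonoid R] (A : Matrix ι ι R) {n : ℕ} (w : Fin (n + 1) → ι) : R :=
  ∏ k : Fin n, A (w k.castSucc) (w k.succ)

/-- The sum of all entries of a matrix. For a power `A ^ n` it is the total weight of the paths with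
`n` edges. -/
def entrySum [Fintype ι] [Fintype κ] [AddCommMonoid R] (A : Matrix ι κ R) : R := ∑ i, ∑ j, A i j

theorem sum_mul_pathWeight_mul [Fintype ι] [DecidableEq ι] [CommSemiring R] (A : Matrix ι ι R)
    (n : ℕ) (u v : ι → R) :
    ∑ w : Fin (n + 1) → ι, u (w 0) * pathWeight A w * v (w (Fin.last n))
      = u ⬝ᵥ A ^ n *ᵥ v := by
  induction n generalizing u with
  | zero =>
    rw [← (Equiv.funUnique (Fin 1) ι).symm.sum_comp]
    simp [pathWeight, dotProduct]
  | succ n ih =>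
    rw [pow_succ', ← Matrix.mulVec_mulVec, Matrix.dotProduct_mulVec, ← ih,
      ← (Fin.consEquiv fun _ => ι).sum_comp, Fintype.sum_prod_type, Finset.sum_comm]
    refine Finset.sum_congr rfl fun w _ => ?_
    simp only [Matrix.vecMul, dotProduct, Finset.sum_mul]
    refine Finset.sum_congr rfl fun i _ => ?_
    simp only [pathWeight, Fin.consEquiv, Equiv.coe_fn_mk, Fin.prod_univ_succ (n := n),
      Fin.castSucc_zero, Fin.cons_zero, Fin.cons_succ, ← Fin.succ_last, ← Fin.succ_castSucc]
    ring

theorem entrySum_eq_one_dotProduct_mulVec_one [Fintype ι] [Fintype κ] [NonAssocSemiring R]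
    (A : Matrix ι κ R) : entrySum A = 1 ⬝ᵥ A *ᵥ 1 := by
  simp [entrySum, dotProduct, Matrix.mulVec]

theorem sum_pathWeight [Fintype ι] [DecidableEq ι] [CommSemiring R] (A : Matrix ι ι R) (n : ℕ) :
    ∑ w : Fin (n + 1) → ι, pathWeight A w = entrySum (A ^ n) := by
  simpa [entrySum_eq_one_dotProduct_mulVec_one] using sum_mul_pathWeight_mul A n 1 1

theorem entrySum_pow_add_add [Fintype ι] [DecidableEq ι] [CommSemiring R] (A : Matrix ι ι R)
    (l n k : ℕ) :
    entrySum (A ^ (l + n + k)) = (Aᵀ ^ l *ᵥ 1) ⬝ᵥ A ^ n *ᵥ (A ^ k *ᵥ 1) := by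
  rw [entrySum_eq_one_dotProduct_mulVec_one, ← Matrix.transpose_pow, Matrix.mulVec_transpose,
    ← Matrix.dotProduct_mulVec, Matrix.mulVec_mulVec, Matrix.mulVec_mulVec, pow_add,
    pow_add]

theorem apply_ne_zero_of_pathWeight_ne_zero [CommMonoidWithZero R] {A : Matrix ι ι R} {n : ℕ}
    {w : Fin (n + 1) → ι} (hw : pathWeight A w ≠ 0) (k : Fin n) :
    A (w k.castSucc) (w k.succ) ≠ 0 :=
  fun h => hw (Finset.prod_eq_zero (Finset.mem_univ k) h)

theorem entrySum_nonneg [Fintype ι] [Fintype κ] [AddCommMonoid R] [PartialOrder R]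
    [IsOrderedAddMonoid R] {A : Matrix ι κ R} (hA : ∀ i j, 0 ≤ A i j) : 0 ≤ entrySum A :=
  Finset.sum_nonneg fun i _ => Finset.sum_nonneg fun j _ => hA i j

end PathWeight

/-! ### Extending paths to infinite paths -/

section Extension

variable {α : Type*}

theorem exists_seq_of_subset_preimage {r : SetRel α α} {s : Set α} (hs : s ⊆ r.preimage s)
    {a : α} (ha : a ∈ s) : ∃ x : ℕ → α, x 0 = a ∧ ∀ k, (x k, x (k + 1)) ∈ r := by
  choose next next_mem hnext using fun b : s => hs b.2
  let f : s → s := fun b => ⟨next b, next_mem b⟩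
  refine ⟨fun k => f^[k] ⟨a, ha⟩, rfl, fun k => ?_⟩
  simp only [Function.iterate_succ_apply']
  exact hnext _

-- The points from which a path of length `k` starts form a decreasing sequence of sets, and once
-- two of them agree every one of their points has a successor among them.
theorem exists_seq_of_mem_iterate_preimage [Finite α] (r : SetRel α α) :
    ∃ K, ∀ a ∈ r.preimage^[K] Set.univ, ∃ x : ℕ → α, x 0 = a ∧ ∀ k, (x k, x (k + 1)) ∈ r := by
  let s : ℕ → Set α := fun k => r.preimage^[k] Set.univ
  have s_anti : Antitone s := r.preimage_mono.antitone_iterate_of_map_le (Set.subset_univ _)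
  obtain ⟨K, L, hKL, h⟩ : ∃ K L, K < L ∧ s K = s L := by
    obtain ⟨K, L, hne, h⟩ := Finite.exists_ne_map_eq_of_infinite s
    rcases hne.lt_or_gt with hlt | hlt
    exacts [⟨K, L, hlt, h⟩, ⟨L, K, hlt, h.symm⟩]
  have hs : s K ⊆ r.preimage (s K) := by
    rw [← Function.iterate_succ_apply' r.preimage K, h]
    exact s_anti hKL
  exact ⟨K, fun a ha => exists_seq_of_subset_preimage hs ha⟩

theorem mem_iterate_preimage_of_pow_mulVec_one_ne_zero {R : Type*} [Fintype α] [DecidableEq α]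
    [Semiring R] (A : Matrix α α R) {k : ℕ} {i : α} (h : (A ^ k *ᵥ 1) i ≠ 0) :
    i ∈ (SetRel.preimage {p : α × α | A p.1 p.2 ≠ 0})^[k] Set.univ := by
  induction k generalizing i with
  | zero => trivial
  | succ k ih =>
    rw [pow_succ', ← Matrix.mulVec_mulVec] at h
    obtain ⟨j, -, hj⟩ := Finset.exists_ne_zero_of_sum_ne_zero h
    rw [Function.iterate_succ_apply']
    exact ⟨j, ih (right_ne_zero_of_mul hj), left_ne_zero_of_mul hj⟩

theorem exists_seq_of_pow_mulVec_one_ne_zero {R : Type*} [Fintype α] [DecidableEq α]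
    [Semiring R] (A : Matrix α α R) :
    ∃ K, ∀ i, (A ^ K *ᵥ 1) i ≠ 0 → ∃ x : ℕ → α, x 0 = i ∧ ∀ k, A (x k) (x (k + 1)) ≠ 0 := by
  obtain ⟨K, hK⟩ := exists_seq_of_mem_iterate_preimage {p : α × α | A p.1 p.2 ≠ 0}
  exact ⟨K, fun i hi => hK i (mem_iterate_preimage_of_pow_mulVec_one_ne_zero A hi)⟩

variable {r : α → α → Prop}

theorem exists_nat_seq_of_word {n : ℕ} {w : Fin (n + 1) → α}
    (hw : ∀ k : Fin n, r (w k.castSucc) (w k.succ)) {z : ℕ → α} (hz₀ : z 0 = w (Fin.last n))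
    (hz : ∀ k, r (z k) (z (k + 1))) :
    ∃ x : ℕ → α, (∀ k : Fin (n + 1), x k = w k) ∧ ∀ k, r (x k) (x (k + 1)) := by
  refine ⟨fun k => if h : k < n + 1 then w ⟨k, h⟩ else z (k - n), fun k => dif_pos k.2,
    fun k => ?_⟩
  rcases lt_trichotomy k n with hk | rfl | hk
  · simpa [hk, hk.le, Nat.lt_succ_of_lt hk] using hw ⟨k, hk⟩
  · simpa [hz₀, Fin.last] using hz 0
  · simpa [hk.not_ge, hk.le.not_gt, Nat.sub_add_comm hk.le, Nat.lt_succ_iff] using hz (k - n)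

theorem exists_int_seq_of_nat_seq {x y : ℕ → α} (h₀ : y 0 = x 0) (hx : ∀ k, r (x k) (x (k + 1)))
    (hy : ∀ k, r (y (k + 1)) (y k)) :
    ∃ z : ℤ → α, (∀ k : ℕ, z k = x k) ∧ ∀ i, r (z i) (z (i + 1)) := by
  refine ⟨fun | .ofNat k => x k | .negSucc k => y (k + 1), fun _ => rfl, ?_⟩
  rintro (k | _ | k)
  · exact hx k
  · exact (h₀ ▸ hy 0 : r (y 1) (x 0))
  · exact hy (k + 1)

end Extension

/-! ### The language of the subshift -/

section Language

variable {N : ℕ} {A : Matrix (Fin N) (Fin N) ℝ}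

open Classical in
/-- The words of length `n` occurring in the points of `Σ_A`. An admissible word need not belong to
the language, as it may fail to extend to a bi-infinite sequence. -/
def language (A : Matrix (Fin N) (Fin N) ℝ) (n : ℕ) : Finset (Fin n → Fin N) :=
  {w | ∃ x : SigmaA N A, ∀ k : Fin n, x.1 k = w k}

theorem mem_language {n : ℕ} {w : Fin n → Fin N} :
    w ∈ language A n ↔ ∃ x : SigmaA N A, ∀ k : Fin n, x.1 k = w k := by
  simp [language]

theorem word_mem_language (x : SigmaA N A) (a : ℤ) (n : ℕ) :
    (fun k : Fin n => x.1 (a + k)) ∈ language A n :=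
  mem_language.2 ⟨⟨fun i => x.1 (a + i), fun i => by simpa [add_assoc] using x.2 (a + i)⟩,
    fun _ => rfl⟩

theorem card_language_eq_zero [IsEmpty (SigmaA N A)] (n : ℕ) : (language A n).card = 0 := by
  simp [language]

theorem card_language_pos [Nonempty (SigmaA N A)] (n : ℕ) : 0 < (language A n).card :=
  Finset.card_pos.2 ⟨_, word_mem_language (Classical.arbitrary _) 0 n⟩

theorem pathWeight_eq_one_of_mem_language {n : ℕ} {w : Fin (n + 1) → Fin N}
    (hw : w ∈ language A (n + 1)) : pathWeight A w = 1 := by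
  obtain ⟨x, hx⟩ := mem_language.1 hw
  refine Finset.prod_eq_one fun k _ => ?_
  rw [← hx, ← hx]
  simpa using x.2 k

theorem card_language_succ_le_entrySum_pow (hA : ∀ i j, 0 ≤ A i j) (n : ℕ) :
    ((language A (n + 1)).card : ℝ) ≤ entrySum (A ^ n) :=
  calc ((language A (n + 1)).card : ℝ)
      = ∑ w ∈ language A (n + 1), pathWeight A w := by
        rw [Finset.sum_congr rfl fun w => pathWeight_eq_one_of_mem_language, Finset.sum_const,
          nsmul_one]
    _ ≤ ∑ w, pathWeight A w :=
        Finset.sum_le_univ_sum_of_nonneg fun w => Finset.prod_nonneg fun _ _ => hA _ _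
    _ = entrySum (A ^ n) := sum_pathWeight A n

theorem mem_language_of_seq {n : ℕ} {w : Fin (n + 1) → Fin N} {y z : ℕ → Fin N}
    (hw : ∀ k : Fin n, A (w k.castSucc) (w k.succ) = 1)
    (hy₀ : y 0 = w 0) (hy : ∀ k, A (y (k + 1)) (y k) = 1)
    (hz₀ : z 0 = w (Fin.last n)) (hz : ∀ k, A (z k) (z (k + 1)) = 1) :
    w ∈ language A (n + 1) := by
  obtain ⟨x, hxw, hx⟩ := exists_nat_seq_of_word (r := fun i j => A i j = 1) hw hz₀ hz
  obtain ⟨x', hx'x, hx'⟩ := exists_int_seq_of_nat_seq (r := fun i j => A i j = 1)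
    (hy₀.trans (hxw 0).symm) hx hy
  exact mem_language.2 ⟨⟨x', hx'⟩, fun k => (hx'x k).trans (hxw k)⟩

theorem exists_forall_mem_language_of_mul_ne_zero (h01 : ∀ i j, A i j = 0 ∨ A i j = 1) :
    ∃ k l : ℕ, ∀ (n : ℕ) (w : Fin (n + 1) → Fin N),
      (Aᵀ ^ l *ᵥ 1) (w 0) * pathWeight A w * (A ^ k *ᵥ 1) (w (Fin.last n)) ≠ 0 →
        w ∈ language A (n + 1) := by
  obtain ⟨k, exists_future⟩ := exists_seq_of_pow_mulVec_one_ne_zero A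
  obtain ⟨l, exists_past⟩ := exists_seq_of_pow_mulVec_one_ne_zero Aᵀ
  have eq_one {i j} : A i j ≠ 0 → A i j = 1 := (h01 i j).resolve_left
  refine ⟨k, l, fun n w hne => ?_⟩
  simp only [mul_ne_zero_iff] at hne
  obtain ⟨⟨past_ne, weight_ne⟩, future_ne⟩ := hne
  obtain ⟨y, hy₀, hy⟩ := exists_past _ past_ne
  obtain ⟨z, hz₀, hz⟩ := exists_future _ future_ne
  exact mem_language_of_seq (fun i => eq_one (apply_ne_zero_of_pathWeight_ne_zero weight_ne i))
    hy₀ (fun i => eq_one (hy i)) hz₀ fun i => eq_one (hz i)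

-- `entrySum (A ^ (l + n + k))` counts words of length `n + 1` with their prolongations by `l`
-- letters to the left and `k` to the right, whose number is bounded independently of `n`.
theorem exists_entrySum_pow_le_card_language (h01 : ∀ i j, A i j = 0 ∨ A i j = 1) :
    ∃ (c : ℕ) (C : ℝ), 0 < C ∧
      ∀ n, entrySum (A ^ (n + c)) ≤ C * (language A (n + 1)).card := by
  obtain ⟨k, l, mem_of_ne_zero⟩ := exists_forall_mem_language_of_mul_ne_zero h01
  set u := Aᵀ ^ l *ᵥ 1
  set v := A ^ k *ᵥ 1
  obtain ⟨C, hC⟩ := Finite.exists_le fun p : Fin N × Fin N => u p.1 * v p.2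
  refine ⟨l + k, max C 1, by positivity, fun n => ?_⟩
  have term_le (w : Fin (n + 1) → Fin N) : u (w 0) * pathWeight A w * v (w (Fin.last n))
      ≤ if w ∈ language A (n + 1) then max C 1 else 0 := by
    split_ifs with hw
    · rw [pathWeight_eq_one_of_mem_language hw, mul_one]
      exact (hC (_, _)).trans (le_max_left _ _)
    · exact le_of_eq (not_not.1 (mt (mem_of_ne_zero n w) hw))
  calc entrySum (A ^ (n + (l + k)))
      = ∑ w : Fin (n + 1) → Fin N, u (w 0) * pathWeight A w * v (w (Fin.last n)) := by
        rw [sum_mul_pathWeight_mul, ← entrySum_pow_add_add, add_left_comm, add_assoc]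
    _ ≤ ∑ w, if w ∈ language A (n + 1) then max C 1 else 0 :=
        Finset.sum_le_sum fun w _ => term_le w
    _ = max C 1 * (language A (n + 1)).card := by
        rw [Finset.sum_ite_mem, Finset.univ_inter, Finset.sum_const, nsmul_eq_mul, mul_comm]

end Language

/-! ### Exponential growth rates -/

section Growth

theorem tendsto_add_div_natCast_iff (f : ℕ → ℝ) (c : ℕ) (l : ℝ) :
    Tendsto (fun n : ℕ => f (n + c) / n) atTop (𝓝 l) ↔
      Tendsto (fun n : ℕ => f n / n) atTop (𝓝 l) := by
  have ratio := tendsto_natCast_div_add_atTop (𝕜 := ℝ) (c : ℝ)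
  rw [← tendsto_add_atTop_iff_nat (f := fun n : ℕ => f n / n) c]
  refine ⟨fun h => ?_, fun h => ?_⟩
  · refine (mul_one l ▸ h.mul ratio).congr' ?_
    filter_upwards [eventually_ne_atTop 0] with n hn
    push_cast
    field_simp
  · refine (div_one l ▸ h.div ratio one_ne_zero).congr' ?_
    filter_upwards [eventually_ne_atTop 0] with n hn
    simp only [Pi.div_apply]
    push_cast
    field_simp

-- Holds at `0` because of the convention `Real.log 0 = 0`.
theorem monotone_log_natCast : Monotone fun n : ℕ => Real.log n := by
  intro m n hmn
  rcases m.eq_zero_or_pos with rfl | hm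
  · simpa using Real.log_natCast_nonneg n
  · exact Real.log_le_log (mod_cast hm) (mod_cast hmn)

theorem tendsto_norm_pow_rpow_toReal_spectralRadius {B : Type*} [NormedRing B]
    [NormedAlgebra ℂ B] [CompleteSpace B] (b : B) :
    Tendsto (fun n : ℕ => ‖b ^ n‖ ^ (1 / n : ℝ)) atTop (𝓝 (spectralRadius ℂ b).toReal) := by
  have ne_top : spectralRadius ℂ b ≠ ⊤ := by
    refine ne_top_of_le_ne_top ?_ (spectrum.spectralRadius_le_pow_nnnorm_pow_one_div ℂ b 0)
    simp [ENNReal.mul_eq_top]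
  refine ((ENNReal.tendsto_toReal ne_top).comp
    (spectrum.pow_norm_pow_one_div_tendsto_nhds_spectralRadius b)).congr fun n => ?_
  exact ENNReal.toReal_ofReal (by positivity)

attribute [local instance] Matrix.linftyOpSeminormedAddCommGroup in
theorem linfty_opNorm_le_sum_sum_norm {m n α : Type*} [Fintype m] [Fintype n]
    [SeminormedAddCommGroup α] (B : Matrix m n α) : ‖B‖ ≤ ∑ i, ∑ j, ‖B i j‖ := by
  have : ‖B‖₊ ≤ ∑ i, ∑ j, ‖B i j‖₊ := by
    rw [Matrix.linfty_opNNNorm_def]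
    exact Finset.sup_le fun i hi =>
      Finset.single_le_sum (f := fun i => ∑ j, ‖B i j‖₊) (fun _ _ => zero_le) hi
  simpa only [← NNReal.coe_le_coe, NNReal.coe_sum, coe_nnnorm] using this

attribute [local instance] Matrix.linftyOpSeminormedAddCommGroup in
theorem sum_sum_norm_le_card_mul_linfty_opNorm {m n α : Type*} [Fintype m] [Fintype n]
    [SeminormedAddCommGroup α] (B : Matrix m n α) :
    ∑ i, ∑ j, ‖B i j‖ ≤ Fintype.card m * ‖B‖ := by
  have : ∑ i, ∑ j, ‖B i j‖₊ ≤ Fintype.card m * ‖B‖₊ := by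
    rw [Matrix.linfty_opNNNorm_def, ← nsmul_eq_mul]
    exact Finset.sum_le_card_nsmul _ _ _ fun i hi =>
      Finset.le_sup (f := fun i => ∑ j, ‖B i j‖₊) hi
  simpa only [← NNReal.coe_le_coe, NNReal.coe_sum, NNReal.coe_mul, NNReal.coe_natCast,
    coe_nnnorm] using this

variable {ι : Type*} [Fintype ι] [DecidableEq ι]

attribute [local instance] Matrix.linftyOpNormedRing Matrix.linftyOpNormedAlgebra

theorem sum_sum_norm_map_ofReal_pow {A : Matrix ι ι ℝ} (hA : ∀ i j, 0 ≤ A i j)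
    (n : ℕ) : ∑ i, ∑ j, ‖(A.map ((↑) : ℝ → ℂ) ^ n) i j‖ = entrySum (A ^ n) := by
  have map_pow : A.map ((↑) : ℝ → ℂ) ^ n = (A ^ n).map (↑) :=
    (Matrix.map_pow A Complex.ofRealHom n).symm
  simp [map_pow, entrySum, abs_of_nonneg (Matrix.pow_apply_nonneg hA n _ _)]

theorem tendsto_entrySum_pow_rpow_toReal_spectralRadius {A : Matrix ι ι ℝ}
    (hA : ∀ i j, 0 ≤ A i j) :
    Tendsto (fun n : ℕ => entrySum (A ^ n) ^ (1 / n : ℝ)) atTop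
      (𝓝 (spectralRadius ℂ (A.map ((↑) : ℝ → ℂ))).toReal) := by
  set B := A.map ((↑) : ℝ → ℂ)
  have gelfand := tendsto_norm_pow_rpow_toReal_spectralRadius B
  -- The `+ 1` covers the empty index type.
  have const_rpow : Tendsto (fun n : ℕ => (Fintype.card ι + 1 : ℝ) ^ (1 / n : ℝ)) atTop (𝓝 1) := by
    simpa using (tendsto_const_nhds (x := (Fintype.card ι + 1 : ℝ))).rpow
      tendsto_one_div_atTop_nhds_zero_nat (Or.inl (by positivity))
  refine tendsto_of_tendsto_of_tendsto_of_le_of_le gelfand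
    (one_mul (_ : ℝ) ▸ const_rpow.mul gelfand) (fun n => ?_) fun n => ?_
  · simp only [← sum_sum_norm_map_ofReal_pow hA n]
    gcongr
    exact linfty_opNorm_le_sum_sum_norm _
  · simp only [← sum_sum_norm_map_ofReal_pow hA n]
    rw [← Real.mul_rpow (by positivity) (by positivity)]
    gcongr
    refine (sum_sum_norm_le_card_mul_linfty_opNorm _).trans ?_
    gcongr
    simp

theorem tendsto_log_entrySum_pow_div {A : Matrix ι ι ℝ} (hA : ∀ i j, 0 ≤ A i j)
    (h1 : ∀ n, 1 ≤ entrySum (A ^ n)) :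
    Tendsto (fun n : ℕ => Real.log (entrySum (A ^ n)) / n) atTop
      (𝓝 (Real.log (spectralRadius ℂ (A.map ((↑) : ℝ → ℂ))).toReal)) := by
  have root_lim := tendsto_entrySum_pow_rpow_toReal_spectralRadius hA
  have one_le := ge_of_tendsto' root_lim fun n => Real.one_le_rpow (h1 n) (by positivity)
  refine (root_lim.log (by positivity)).congr fun n => ?_
  rw [Real.log_rpow (by linarith [h1 n]), one_div_mul_eq_div]

theorem toReal_spectralRadius_eq_zero_of_entrySum_pow_eq_zero {A : Matrix ι ι ℝ}
    (hA : ∀ i j, 0 ≤ A i j) (h0 : ∀ᶠ n in atTop, entrySum (A ^ n) = 0) :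
    (spectralRadius ℂ (A.map ((↑) : ℝ → ℂ))).toReal = 0 := by
  refine tendsto_nhds_unique (tendsto_entrySum_pow_rpow_toReal_spectralRadius hA)
    (tendsto_const_nhds.congr' ?_)
  filter_upwards [h0, eventually_ne_atTop 0] with n hn hn'
  rw [hn, Real.zero_rpow (by positivity)]

theorem tendsto_log_card_language_div {N : ℕ} {A : Matrix (Fin N) (Fin N) ℝ}
    (h01 : ∀ i j, A i j = 0 ∨ A i j = 1) :
    Tendsto (fun n : ℕ => Real.log (language A n).card / n) atTop
      (𝓝 (Real.log (spectralRadius ℂ (A.map ((↑) : ℝ → ℂ))).toReal)) := by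
  have hA (i j) : 0 ≤ A i j := by rcases h01 i j with h | h <;> simp [h]
  obtain ⟨c, C, hC, entrySum_le⟩ := exists_entrySum_pow_le_card_language h01
  rcases isEmpty_or_nonempty (SigmaA N A) with hempty | hne
  · have entrySum_zero : ∀ᶠ n in atTop, entrySum (A ^ n) = 0 := by
      filter_upwards [eventually_ge_atTop c] with n hn
      refine le_antisymm ?_ (entrySum_nonneg (Matrix.pow_apply_nonneg hA n))
      simpa [card_language_eq_zero, hn] using entrySum_le (n - c)
    -- Both sides are `Real.log 0 = 0` here.
    simp [toReal_spectralRadius_eq_zero_of_entrySum_pow_eq_zero hA entrySum_zero,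
      card_language_eq_zero]
  · have card_pos (n) : (0 : ℝ) < (language A n).card := mod_cast card_language_pos n
    have le_entrySum := card_language_succ_le_entrySum_pow hA
    have one_le (n) : 1 ≤ entrySum (A ^ n) :=
      le_trans (mod_cast card_language_pos (n + 1)) (le_entrySum n)
    have growth := tendsto_log_entrySum_pow_div hA one_le
    have lower := ((tendsto_add_div_natCast_iff _ c _).2 growth).sub
      (tendsto_const_div_atTop_nhds_zero_nat (Real.log C))
    rw [sub_zero] at lower
    rw [← tendsto_add_div_natCast_iff (fun n => Real.log (language A n).card) 1]
    refine tendsto_of_tendsto_of_tendsto_of_le_of_le lower growth (fun n => ?_) fun n => ?_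
    · have log_le := Real.log_le_log (zero_lt_one.trans_le (one_le _)) (entrySum_le n)
      rw [Real.log_mul hC.ne' (card_pos _).ne'] at log_le
      rw [← sub_div]
      gcongr
      linarith
    · exact div_le_div_of_nonneg_right (Real.log_le_log (card_pos _) (le_entrySum n)) n.cast_nonneg

end Growth

/-! ### Separated sets -/

section Separated

theorem exists_finset_forall_eq_imp_dist_lt {X ι : Type*} {Y : ι → Type*} [PseudoMetricSpace X]
    [CompactSpace X] [∀ i, TopologicalSpace (Y i)] [∀ i, T2Space (Y i)] {f : X → ∀ i, Y i}
    (hf : Continuous f) (hinj : Function.Injective f) {ε : ℝ} (hε : 0 < ε) :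
    ∃ s : Finset ι, ∀ x y, (∀ i ∈ s, f x i = f y i) → dist x y < ε := by
  classical
  let V : Finset ι → Set (X × X) := fun s => {p | ∀ i ∈ s, f p.1 i = f p.2 i}
  have V_anti : Antitone V := fun s t hst p hp i hi => hp i (hst hi)
  have V_closed (s) : IsClosed (V s) := by
    simp only [V, Set.ofPred_forall]
    exact isClosed_biInter fun i _ => isClosed_eq
      ((continuous_apply i).comp (hf.comp continuous_fst))
      ((continuous_apply i).comp (hf.comp continuous_snd))
  obtain ⟨s, hs⟩ := exists_subset_nhds_of_compactSpace (U := {p : X × X | dist p.1 p.2 < ε})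
    V_anti.directed_ge V_closed fun p hp => by
      have hp_eq : p.1 = p.2 := hinj <| funext fun i =>
        Set.mem_iInter.1 hp {i} i (Finset.mem_singleton_self i)
      refine (isOpen_lt continuous_dist continuous_const).mem_nhds ?_
      simpa [hp_eq] using hε
  exact ⟨s, fun x y h => hs (a := (x, y)) h⟩

theorem exists_pos_forall_dist_le_imp_eq {X Y : Type*} [PseudoMetricSpace X] [CompactSpace X]
    [TopologicalSpace Y] [DiscreteTopology Y] {f : X → Y} (hf : Continuous f) :
    ∃ ε > 0, ∀ x y, dist x y ≤ ε → f x = f y := by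
  obtain ⟨δ, hδ, h⟩ := lebesgue_number_lemma_of_metric isCompact_univ
    (fun b : Y => (isOpen_discrete {b}).preimage hf) fun x _ => Set.mem_iUnion.2 ⟨f x, rfl⟩
  refine ⟨δ / 2, half_pos hδ, fun x y hxy => ?_⟩
  obtain ⟨b, hb⟩ := h y trivial
  have hx : f x = b := hb (Metric.mem_ball.2 (hxy.trans_lt (half_lt_self hδ)))
  have hy : f y = b := hb (Metric.mem_ball_self hδ)
  exact hx.trans hy.symm

variable {X : Type*} [PseudoMetricSpace X] {f : X → X} {n b : ℕ} {ε : ℝ}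

theorem sepCount_le (hb : ∀ W : Finset X, IsSep f n ε (W : Set X) → W.card ≤ b) :
    sepCount f n ε ≤ b := by
  refine csSup_le ⟨0, ∅, by simp [IsSep], rfl⟩ ?_
  rintro _ ⟨W, hW, rfl⟩
  exact hb W hW

theorem IsSep.card_le_sepCount (hb : ∀ W : Finset X, IsSep f n ε (W : Set X) → W.card ≤ b)
    {W : Finset X} (hW : IsSep f n ε (W : Set X)) : W.card ≤ sepCount f n ε := by
  refine le_csSup ⟨b, ?_⟩ ⟨W, hW, rfl⟩
  rintro _ ⟨W, hW, rfl⟩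
  exact hb W hW

end Separated

/-! ### Entropy of the shift as the growth rate of the language -/

section Shift

theorem isClosed_setOf_forall_apply_apply_succ {α : Type*} [TopologicalSpace α]
    [DiscreteTopology α] (r : α → α → Prop) :
    IsClosed {x : ℤ → α | ∀ i, r (x i) (x (i + 1))} := by
  rw [Set.ofPred_forall]
  exact isClosed_iInter fun i => (isClosed_discrete {p : α × α | r p.1 p.2}).preimage
    (f := fun x : ℤ → α => (x i, x (i + 1))) (by fun_prop)

variable {N : ℕ} {A : Matrix (Fin N) (Fin N) ℝ}

theorem shiftA_iterate_apply (k : ℕ) (x : SigmaA N A) (i : ℤ) :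
    ((shiftA N A)^[k] x).1 i = x.1 (i + k) := by
  induction k generalizing x with
  | zero => simp
  | succ k ih =>
    rw [Function.iterate_succ_apply, ih, Nat.cast_succ, ← add_assoc]
    rfl

variable [PseudoMetricSpace (SigmaA N A)] [CompactSpace (SigmaA N A)]

theorem exists_forall_isSep_card_le_card_language
    (hval : Continuous fun x : SigmaA N A => x.1) {ε : ℝ} (hε : 0 < ε) :
    ∃ M : ℕ, ∀ (n : ℕ) (W : Finset (SigmaA N A)), IsSep (shiftA N A) n ε (W : Set (SigmaA N A)) →
      W.card ≤ (language A (n + M)).card := by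
  obtain ⟨s, hs⟩ := exists_finset_forall_eq_imp_dist_lt hval Subtype.val_injective hε
  let M := s.sup Int.natAbs
  refine ⟨2 * M, fun n W hW => Finset.card_le_card_of_injOn (fun x k => x.1 (-M + k))
    (fun x _ => word_mem_language x (-M) _) fun x hx y hy hxy => ?_⟩
  by_contra hne
  obtain ⟨k, hk, hdist⟩ := hW x hx y hy hne
  refine hdist.not_gt (hs _ _ fun i hi => ?_)
  have hiM : i.natAbs ≤ M := Finset.le_sup hi
  have index_eq : -(M : ℤ) + (i + k + M).toNat = i + k := by omega
  simpa only [index_eq, shiftA_iterate_apply] using congrFun hxy ⟨(i + k + M).toNat, by omega⟩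

theorem exists_card_language_le_sepCount
    (hval : Continuous fun x : SigmaA N A => x.1) :
    ∃ ε > 0, ∀ n, (language A n).card ≤ sepCount (shiftA N A) n ε := by
  classical
  obtain ⟨ε, hε, eq_of_dist_le⟩ :=
    exists_pos_forall_dist_le_imp_eq ((continuous_apply (0 : ℤ)).comp hval)
  obtain ⟨M, hM⟩ := exists_forall_isSep_card_le_card_language hval hε
  refine ⟨ε, hε, fun n => ?_⟩
  choose x hx using fun w : language A n => mem_language.1 w.2
  have eq_of_dist_iterate_le (w w' : language A n)
      (h : ∀ k < n, dist ((shiftA N A)^[k] (x w)) ((shiftA N A)^[k] (x w')) ≤ ε) : w = w' := by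
    refine Subtype.ext (funext fun k => ?_)
    have := eq_of_dist_le _ _ (h k k.2)
    simpa only [Function.comp_apply, shiftA_iterate_apply, zero_add, hx] using this
  have x_inj : Function.Injective x := fun w w' h =>
    eq_of_dist_iterate_le w w' fun k _ => by simpa [h] using hε.le
  have x_sep : IsSep (shiftA N A) n ε (Finset.univ.image x : Finset (SigmaA N A)) := by
    simp only [IsSep, Finset.coe_image, Finset.coe_univ, Set.image_univ, Set.forall_mem_range]
    intro w w' hne
    contrapose! hne
    rw [eq_of_dist_iterate_le w w' hne]
  simpa [Finset.card_image_of_injective _ x_inj] using x_sep.card_le_sepCount (hM n)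

theorem topEnt_shiftA_eq_of_tendsto (hval : Continuous fun x : SigmaA N A => x.1)
    {l : ℝ} (hl : Tendsto (fun n : ℕ => Real.log (language A n).card / n) atTop (𝓝 l)) :
    topEnt (shiftA N A) = l := by
  have limsup_eq {u : ℕ → ℝ} (hu : Tendsto u atTop (𝓝 l)) :
      limsup (fun n => (u n : EReal)) atTop = l :=
    ((continuous_coe_real_ereal.tendsto l).comp hu).limsup_eq
  apply le_antisymm
  · refine iSup₂_le fun ε hε => ?_
    obtain ⟨M, hM⟩ := exists_forall_isSep_card_le_card_language hval hε
    rw [← limsup_eq ((tendsto_add_div_natCast_iff _ M _).2 hl)]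
    refine limsup_le_limsup (Eventually.of_forall fun n => EReal.coe_le_coe ?_)
    gcongr ?_ / _
    exact monotone_log_natCast (sepCount_le (hM n))
  · obtain ⟨ε, hε, h⟩ := exists_card_language_le_sepCount hval
    rw [← limsup_eq hl]
    refine le_iSup₂_of_le ε hε <|
      limsup_le_limsup (Eventually.of_forall fun n => EReal.coe_le_coe ?_)
    gcongr ?_ / _
    exact monotone_log_natCast (h n)

end Shift

/-- The topological entropy of a subshift of finite type `σ : Σ_A → Σ_A` equals the logarithm
of the spectral radius of its `0`-`1` transition matrix `A`, for any metric on `Σ_A`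
compatible with the (subspace of the product) topology. -/
theorem entropy_SFT (N : ℕ) (A : Matrix (Fin N) (Fin N) ℝ)
    (h01 : ∀ i j, A i j = 0 ∨ A i j = 1)
    (m : MetricSpace (SigmaA N A))
    (hcompat : m.toUniformSpace.toTopologicalSpace
      = (inferInstance : TopologicalSpace {x : ℤ → Fin N // ∀ i : ℤ, A (x i) (x (i + 1)) = 1})) :
    @topEnt _ m.toPseudoMetricSpace (shiftA N A)
      = ((Real.log ((spectralRadius ℂ (A.map ((↑) : ℝ → ℂ))).toReal) : ℝ) : EReal) := by
  let _ := m
  have emb : IsClosedEmbedding fun x : SigmaA N A => x.1 :=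
    { eq_induced := hcompat
      injective := Subtype.val_injective
      isClosed_range := (isClosed_setOf_forall_apply_apply_succ
        fun i j => A i j = 1).isClosedEmbedding_subtypeVal.isClosed_range }
  have := emb.compactSpace
  exact topEnt_shiftA_eq_of_tendsto emb.continuous (tendsto_log_card_language_div h01)
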